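/- arXiv:1712.00560 — 2 statements merged into one kernel-verified Lean document; each statement's English description precedes it below -/
import Mathlib

section
/- Every R⊥-category is Cauchy complete. Concretely: let (E, d) be an R⊥-category and let M, N : E → WithBot ℝ≥0∞ satisfy (right action) d Y X + M X ≤ M Y for all X, Y; (left action) N X + d X Y ≤ N Y for all X, Y; (unit) 0 ≤ ⨆ X, (N X + M X); and (counit) M X + N Y ≤ d X Y for all X, Y. Then there exists Z in E such that M Y = d Y Z for all Y in E, i.e. the Cauchy module M is represented by the object Z. -/
open scoped ENNReal

/-!
In `WithBot α` with `α` canonically ordered, `0` is the least element above `⊥`. So the unit of the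
adjunction, `0 ≤ ⨆ X, (N X + M X)`, is already witnessed by a single object `Z`, at which both
`M Z` and `N Z` are nonnegative. At this `Z` the right action and the counit give
`d Y Z ≤ d Y Z + M Z ≤ M Y ≤ M Y + N Z ≤ d Y Z`.
-/

section

variable {α : Type*} [AddZeroClass α]

theorem withBot_nonneg_iff_ne_bot [LE α] [CanonicallyOrderedAdd α] {a : WithBot α} :
    0 ≤ a ↔ a ≠ ⊥ := by
  cases a with
  | bot => simp
  | coe a => exact iff_of_true (WithBot.coe_nonneg.mpr zero_le) WithBot.coe_ne_bot

theorem withBot_add_nonneg_iff [LE α] [CanonicallyOrderedAdd α] {a b : WithBot α} :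
    0 ≤ a + b ↔ 0 ≤ a ∧ 0 ≤ b := by
  simp only [withBot_nonneg_iff_ne_bot, WithBot.add_ne_bot]

theorem withBot_iSup_nonneg_iff [CompleteLattice α] [CanonicallyOrderedAdd α] {ι : Sort*}
    {f : ι → WithBot α} : 0 ≤ ⨆ i, f i ↔ ∃ i, 0 ≤ f i := by
  simp only [withBot_nonneg_iff_ne_bot, ne_eq, iSup_eq_bot, not_forall]

end

theorem eq_of_action_of_counit_of_nonneg {E V : Type*} [AddZeroClass V] [PartialOrder V]
    [AddLeftMono V] {d : E → E → V} {M N : E → V} {Z : E}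
    (action : ∀ Y, d Y Z + M Z ≤ M Y) (counit : ∀ Y, M Y + N Z ≤ d Y Z)
    (hMZ : 0 ≤ M Z) (hNZ : 0 ≤ N Z) (Y : E) : M Y = d Y Z :=
  le_antisymm ((le_add_of_nonneg_right hNZ).trans (counit Y))
    ((le_add_of_nonneg_right hMZ).trans (action Y))

theorem causal_space_cauchy_complete_general {E α : Type*} [AddMonoid α] [CompleteLattice α]
    [CanonicallyOrderedAdd α] (d : E → E → WithBot α) (M N : E → WithBot α)
    (hM : ∀ X Y, d Y X + M X ≤ M Y)
    (hη : 0 ≤ ⨆ X, (N X + M X))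
    (hε : ∀ X Y, M X + N Y ≤ d X Y) :
    ∃ Z, ∀ Y, M Y = d Y Z := by
  obtain ⟨Z, hZ⟩ := withBot_iSup_nonneg_iff.mp hη
  obtain ⟨hNZ, hMZ⟩ := withBot_add_nonneg_iff.mp hZ
  exact ⟨Z, eq_of_action_of_counit_of_nonneg (hM Z) (hε · Z) hMZ hNZ⟩

/-- Every `R⊥`-category is Cauchy complete: any left adjoint module `M` (with right
adjoint `N`) on a causal space `(E, d)` is represented by some object `Z`. -/
theorem causal_space_cauchy_complete {E : Type*} (d : E → E → WithBot ℝ≥0∞)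
    (hunit : ∀ X, 0 ≤ d X X)
    (hcomp : ∀ X Y Z, d X Y + d Y Z ≤ d X Z)
    (M N : E → WithBot ℝ≥0∞)
    (hM : ∀ X Y, d Y X + M X ≤ M Y)
    (hN : ∀ X Y, N X + d X Y ≤ N Y)
    (hη : 0 ≤ ⨆ X, (N X + M X))
    (hε : ∀ X Y, M X + N Y ≤ d X Y) :
    ∃ Z, ∀ Y, M Y = d Y Z :=
  causal_space_cauchy_complete_general d M N hM hη hε
end

section
/- Let V be a category with (small) coproducts, A : ι → V a family of objects, and w : ∀ i, A i ⟶ B a family of morphisms such that the induced map w̄ : ∐ A ⟶ B is a regular epimorphism. Assume moreover that for every parallel pair x, y : D ⟶ ∐ A, the family F_{x,y} of all morphisms p : P ⟶ D for which there exist indices i, j and maps p_i : P ⟶ A i, p_j : P ⟶ A j with x ∘ p = ι_i ∘ p_i and y ∘ p = ι_j ∘ p_j (ι denoting coproduct injections) is jointly epic. Then the family {w_i} is jointly regular epi: it is a quotient of its kernel relation, i.e. for every object C and family f : ∀ i, A i ⟶ C such that for every object P, indices i, j, and maps p_i : P ⟶ A i, p_j : P ⟶ A j with p_i ≫ w i =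 p_j ≫ w j one has p_i ≫ f i = p_j ≫ f j, there exists a unique h : B ⟶ C with w i ≫ h = f i for all i. -/
open CategoryTheory Limits

universe w v u

/-!
Since `Sigma.desc w` is an effective epimorphism, it suffices that `Sigma.desc f` identifies every
pair `x, y : D ⟶ ∐ A` identified by `Sigma.desc w`. This may be tested on the jointly epic family of
maps `p` along which both `x` and `y` land in single summands, and there the pair becomes a span in
the kernel of `w`, on which `f` agrees by assumption.
-/

section

variable {V : Type*} [Category* V] {ι : Type*} {A : ι → V} {B C D P : V}

/-- A family of morphisms into `D`, encoded as a presieve, is jointly epic if two morphisms out of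
`D` are equal as soon as they agree after precomposition with each member of the family. -/
def IsJointlyEpic (R : Presieve D) : Prop :=
  ∀ (C : V) (u v : D ⟶ C), (∀ (P : V) (p : P ⟶ D), R p → p ≫ u = p ≫ v) → u = v

/-- The family `F_{x,y}` of morphisms `p : P ⟶ D` along which both `x` and `y` factor through a
single coproduct injection, possibly a different one for each. -/
def summandFactorizations [HasCoproduct A] (x y : D ⟶ ∐ A) : Presieve D :=
  fun P p => ∃ (i j : ι) (pi : P ⟶ A i) (pj : P ⟶ A j),
    p ≫ x = pi ≫ Sigma.ι A i ∧ p ≫ y = pj ≫ Sigma.ι A j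

/-- The family `f` is a cocone over the kernel relation of the family `w`: it equalizes every span
`A i ⟵ P ⟶ A j` that `w` equalizes. -/
def KernelCompatible (w : ∀ i, A i ⟶ B) (f : ∀ i, A i ⟶ C) : Prop :=
  ∀ (P : V) (i j : ι) (pi : P ⟶ A i) (pj : P ⟶ A j), pi ≫ w i = pj ≫ w j → pi ≫ f i = pj ≫ f j

theorem existsUnique_comp_eq_of_effectiveEpiFamily {w : ∀ i, A i ⟶ B} [EffectiveEpiFamily A w]
    {f : ∀ i, A i ⟶ C} (hf : KernelCompatible w f) : ∃! h : B ⟶ C, ∀ i, w i ≫ h = f i :=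
  ⟨EffectiveEpiFamily.desc A w f (hf _), EffectiveEpiFamily.fac A w f (hf _),
    EffectiveEpiFamily.uniq A w f (hf _)⟩

variable [HasCoproduct A]

theorem sigmaDesc_comp_eq_sigmaDesc_iff {w : ∀ i, A i ⟶ B} {f : ∀ i, A i ⟶ C} {h : B ⟶ C} :
    Sigma.desc w ≫ h = Sigma.desc f ↔ ∀ i, w i ≫ h = f i := by
  refine ⟨fun hh i => ?_, fun hh => Sigma.hom_ext _ _ fun i => by simpa using hh i⟩
  simpa using Sigma.ι A i ≫= hh

theorem comp_comp_sigmaDesc_of_comp_eq (f : ∀ i, A i ⟶ C) {x : D ⟶ ∐ A} {p : P ⟶ D} {i : ι}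
    {pi : P ⟶ A i} (hx : p ≫ x = pi ≫ Sigma.ι A i) : p ≫ x ≫ Sigma.desc f = pi ≫ f i := by
  simpa using hx =≫ Sigma.desc f

namespace KernelCompatible

variable {w : ∀ i, A i ⟶ B} {f : ∀ i, A i ⟶ C} {x y : D ⟶ ∐ A}

theorem comp_comp_sigmaDesc_eq (hf : KernelCompatible w f) {p : P ⟶ D}
    (hp : summandFactorizations x y p)
    (hw : p ≫ x ≫ Sigma.desc w = p ≫ y ≫ Sigma.desc w) :
    p ≫ x ≫ Sigma.desc f = p ≫ y ≫ Sigma.desc f := by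
  obtain ⟨i, j, pi, pj, hx, hy⟩ := hp
  rw [comp_comp_sigmaDesc_of_comp_eq _ hx, comp_comp_sigmaDesc_of_comp_eq _ hy] at hw ⊢
  exact hf P i j pi pj hw

theorem comp_sigmaDesc_eq (hf : KernelCompatible w f)
    (hxy : IsJointlyEpic (summandFactorizations x y))
    (hw : x ≫ Sigma.desc w = y ≫ Sigma.desc w) :
    x ≫ Sigma.desc f = y ≫ Sigma.desc f :=
  hxy C _ _ fun _ p hp => hf.comp_comp_sigmaDesc_eq hp (p ≫= hw)

end KernelCompatible

theorem regularEpi_family_quotient_of_kernel_general (w : ∀ i, A i ⟶ B)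
    [EffectiveEpi (Sigma.desc w)]
    (hF : ∀ (D : V) (x y : D ⟶ ∐ A), x ≫ Sigma.desc w = y ≫ Sigma.desc w →
      IsJointlyEpic (summandFactorizations x y)) :
    EffectiveEpiFamily A w := by
  have coequalizes {C : V} {f : ∀ i, A i ⟶ C} (hf : KernelCompatible w f) {D : V}
      (x y : D ⟶ ∐ A) (hxy : x ≫ Sigma.desc w = y ≫ Sigma.desc w) :
      x ≫ Sigma.desc f = y ≫ Sigma.desc f :=
    hf.comp_sigmaDesc_eq (hF D x y hxy) hxy
  exact ⟨⟨{
    desc f hf := EffectiveEpi.desc (Sigma.desc w) (Sigma.desc f) (coequalizes fun _ => hf)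
    fac f hf := sigmaDesc_comp_eq_sigmaDesc_iff.1 (EffectiveEpi.fac _ _ _)
    uniq f hf h hh := EffectiveEpi.uniq _ _ _ h (sigmaDesc_comp_eq_sigmaDesc_iff.2 hh) }⟩⟩

end

/-- If the cotuple `∐ A ⟶ B` of a family `w i : A i ⟶ B` is a regular
epimorphism, and for every parallel pair `x, y : D ⟶ ∐ A` the family `F_{x,y}` of
maps `p : P ⟶ D` factoring `x ∘ p` and `y ∘ p` through coproduct injections is
jointly epic, then the family `{w i}` is jointly regular epi, i.e. it is a
quotient (colimit cocone) of its kernel relation. -/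
theorem regularEpi_family_quotient_of_kernel {V : Type u} [Category.{v} V]
    [HasCoproducts.{w} V] {ι : Type w}
    (A : ι → V) (B : V) (w : ∀ i, A i ⟶ B)
    (hreg : Nonempty (RegularEpi (Sigma.desc w)))
    (hF : ∀ (D : V) (x y : D ⟶ ∐ A) (C : V) (u v : D ⟶ C),
      (∀ (P : V) (p : P ⟶ D),
        (∃ (i j : ι) (pi : P ⟶ A i) (pj : P ⟶ A j),
          p ≫ x = pi ≫ Sigma.ι A i ∧ p ≫ y = pj ≫ Sigma.ι A j) →
          p ≫ u = p ≫ v) → u = v) :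
    ∀ (C : V) (f : ∀ i, A i ⟶ C),
      (∀ (P : V) (i j : ι) (pi : P ⟶ A i) (pj : P ⟶ A j),
        pi ≫ w i = pj ≫ w j → pi ≫ f i = pj ≫ f j) →
        ∃! h : B ⟶ C, ∀ i, w i ≫ h = f i := by
  have := hreg.some.effectiveEpi
  have := regularEpi_family_quotient_of_kernel_general w fun D x y _ => hF D x y
  exact fun _ _ => existsUnique_comp_eq_of_effectiveEpiFamily
end
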